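/- Let b > 1/2 and b' ≤ 5/8. There exists a constant C > 0 such that for every δ ∈ (0, 1] and all measurable functions f₁, f₂ : ℝ² → [0, ∞) satisfying f_j(τ, ξ) = 0 whenever |ξ| ≤ δ^{-1} (j = 1, 2), one has ( ∫∫_{ℝ²} 𝟙_{|ξ| ≤ δ^{-1}} · |ξ|² · ⟨τ − p̃_δ(ξ)⟩^{2(b'−1)} · ( ∫∫_{ℝ²} f₁(τ₁, ξ₁) f₂(τ − τ₁, ξ − ξ₁) ⟨τ₁ − p̃_δ(ξ₁)⟩^{−b} ⟨(τ − τ₁) − p̃_δ(ξ − ξ₁)⟩^{−b} dτ₁ dξ₁ )² dτ dξ )^{1/2} ≤ C · ‖f₁‖_{L²(ℝ²)} · ‖f₂‖_{L²(ℝ²)}. -/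

import Mathlib

/-!
# High × high → low bilinear estimate for the scaled ILW equation, uniformly in `δ`

The classical sum for the hyperbolic cotangent gives `p̃_δ(ξ) = 3 δ⁻³ g(δ ξ)` with
`g(x) = x² coth x - x` (`ptilde_eq`). The profile `g` is odd and satisfies `g'' ≥ 1/2` on `[1, ∞)`.

By Cauchy-Schwarz in the inner integral and Tonelli, it suffices to bound, uniformly in `δ ≤ 1`
and in `(τ, ξ)` with `|ξ| ≤ δ⁻¹`,
`|ξ|² ∫∫ ⟨τ₁ - p̃(ξ₁)⟩^{-2b} ⟨τ - τ₁ - p̃(ξ - ξ₁)⟩^{-2b} dτ₁ dξ₁`,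
where `ξ₁` and `ξ - ξ₁` are both larger than `δ⁻¹` in absolute value
(`sq_mul_lintegral_ker_sq_le`); the modulation weight `⟨τ - p̃(ξ)⟩^{2(b'-1)}` is at most `1` and is
simply dropped. The `τ₁` integral is at most a constant times `⟨τ - φ(ξ₁)⟩^{-2b}`, where
`φ(ξ₁) = p̃(ξ₁) + p̃(ξ - ξ₁)` (`lintegral_wt_conv_le`). Since the output frequency is low, `ξ₁` and
`ξ - ξ₁` have opposite signs, so by oddness `φ` is a difference of two values of `p̃` at
frequencies of the same sign, at distance `|ξ|` from each other. The convexity of `g` then shows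
that `φ` expands distances by a factor `K = (3/2) |ξ| / δ` (`ptilde_transversal`), and the `ξ₁`
integral is `O(1 / K) = O(δ / |ξ|)` (`lintegral_wt_expanding_le`). Finally
`|ξ|² · δ / |ξ| = δ |ξ| ≤ 1`.
-/

open Real MeasureTheory

/-- Japanese bracket `⟨x⟩ = (1 + x²)^{1/2}`. -/
noncomputable def jap (x : ℝ) : ℝ := Real.sqrt (1 + x ^ 2)

/-- The Fourier multiplier of the scaled ILW dispersion operator:
`L_δ(ξ) = 6ξ² ∑_{k=1}^∞ 1/(k²π² + δ²ξ²)`. -/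
noncomputable def Ldelta (δ ξ : ℝ) : ℝ :=
  6 * ξ ^ 2 * ∑' k : ℕ, 1 / (((k : ℝ) + 1) ^ 2 * Real.pi ^ 2 + δ ^ 2 * ξ ^ 2)

/-- The dispersion symbol `p̃_δ(ξ) = ξ·L_δ(ξ)` of the scaled ILW. -/
noncomputable def ptilde (δ ξ : ℝ) : ℝ := ξ * Ldelta δ ξ

/-! ### Closed form of the dispersion symbol -/

/-- The partial fraction expansion of `coth`: the cotangent series of Mathlib evaluated at
`z = i a / π`. -/
theorem tsum_inv_sq_add_sq {a : ℝ} (ha : 0 < a) :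
    ∑' k : ℕ, 1 / (((k : ℝ) + 1) ^ 2 * π ^ 2 + a ^ 2) =
      (cosh a / sinh a - 1 / a) / (2 * a) := by
  set z : ℂ := (a / π : ℝ) * Complex.I with hz
  have hpi : (π : ℂ) ≠ 0 := by exact_mod_cast pi_ne_zero
  have haC : (a : ℂ) ≠ 0 := by exact_mod_cast ha.ne'
  have him : z.im = a / π := by simp [hz]
  have hzc : z ∈ Complex.integerComplement := by
    rw [Complex.mem_integerComplement_iff]
    rintro ⟨n, hn⟩
    have h := congrArg Complex.im hn
    rw [him, Complex.intCast_im] at h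
    have : 0 < a / π := by positivity
    exact this.ne h
  have hpz : (π : ℂ) * z = a * Complex.I := by
    rw [hz]; push_cast; field_simp
  have hs : Complex.sinh a ≠ 0 := by
    rw [← Complex.ofReal_sinh]
    exact_mod_cast (sinh_pos_iff.2 ha).ne'
  have key := cot_series_rep' hzc
  have hterm : ∀ n : ℕ, (1 / (z - (n + 1)) + 1 / (z + (n + 1)) : ℂ) =
      (-2 * a * π * Complex.I) *
        ((1 / (((n : ℝ) + 1) ^ 2 * π ^ 2 + a ^ 2) : ℝ) : ℂ) := by
    intro n
    have h1 : z - (n + 1) ≠ 0 := by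
      intro h
      have := congrArg Complex.im h
      simp [him] at this
      exact ha.ne' this
    have h2 : z + (n + 1) ≠ 0 := by
      intro h
      have := congrArg Complex.im h
      simp [him] at this
      exact ha.ne' this
    have h3 : (((n : ℂ) + 1) ^ 2 * π ^ 2 + a ^ 2) ≠ 0 := by
      have : (0 : ℝ) < ((n : ℝ) + 1) ^ 2 * π ^ 2 + a ^ 2 := by positivity
      exact_mod_cast this.ne'
    have hz2 : z ^ 2 * π ^ 2 = - a ^ 2 := by
      rw [← mul_pow, mul_comm z, hpz, mul_pow, Complex.I_sq]; ring
    have hzπ : z * π = a * Complex.I := by rw [mul_comm, hpz]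
    push_cast
    rw [div_add_div _ _ h1 h2, mul_one_div, div_eq_div_iff (mul_ne_zero h1 h2) h3]
    linear_combination (2 * ((n : ℂ) + 1) ^ 2 * π - 2 * z ^ 2 * π) * hzπ + 2 * z * hz2
  rw [tsum_congr hterm, tsum_mul_left, ← Complex.ofReal_tsum, hpz, Complex.cot,
    Complex.cos_mul_I, Complex.sin_mul_I] at key
  have hI := Complex.I_sq
  have key2 : ((∑' k : ℕ, 1 / (((k : ℝ) + 1) ^ 2 * π ^ 2 + a ^ 2) : ℝ) : ℂ) =
      ((cosh a / sinh a - 1 / a) / (2 * a) : ℝ) := by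
    have hne : (-2 * a * π * Complex.I : ℂ) ≠ 0 := by
      simp [haC, hpi]
    apply mul_left_cancel₀ hne
    rw [← key]
    have hz0 : 1 / z = - π * Complex.I / a := by
      have : z ≠ 0 := Complex.integerComplement.ne_zero hzc
      rw [div_eq_div_iff this haC]
      linear_combination Complex.I * hpz + a * hI
    rw [hz0]
    push_cast
    have hI0 := Complex.I_ne_zero
    have : Complex.cosh a / (Complex.sinh a * Complex.I) =
        - Complex.I * (Complex.cosh a / Complex.sinh a) := by
      field_simp
      linear_combination (Complex.cosh a) * hI
    rw [this]
    field_simp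
    ring
  exact_mod_cast key2

/-- The profile `g(x) = x² coth x - x`, of which every `p̃_δ` is a rescaling. Division by zero
gives `g(0) = 0`, which is also the limit at `0`. -/
noncomputable def profile (x : ℝ) : ℝ := x ^ 2 * cosh x / sinh x - x

theorem profile_neg (x : ℝ) : profile (-x) = - profile x := by
  simp [profile]; ring

theorem ptilde_neg (δ ξ : ℝ) : ptilde δ (-ξ) = - ptilde δ ξ := by
  simp [ptilde, Ldelta]

/-- Closed form of the symbol, valid also at `ξ = 0` since both sides vanish there. -/
theorem ptilde_eq {δ : ℝ} (hδ : 0 < δ) (ξ : ℝ) :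
    ptilde δ ξ = 3 / δ ^ 3 * profile (δ * ξ) := by
  have hpos : ∀ ξ : ℝ, 0 < ξ → ptilde δ ξ = 3 / δ ^ 3 * profile (δ * ξ) := by
    intro ξ hξ
    have h := tsum_inv_sq_add_sq (mul_pos hδ hξ)
    have hs : sinh (δ * ξ) ≠ 0 := (sinh_pos_iff.2 (mul_pos hδ hξ)).ne'
    rw [mul_pow] at h
    rw [ptilde, Ldelta, h, profile]
    field_simp
    ring
  rcases lt_trichotomy ξ 0 with h | h | h
  · have := hpos (-ξ) (by linarith)
    rw [ptilde_neg, mul_neg, profile_neg] at this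
    linarith
  · subst h; simp [ptilde, profile]
  · exact hpos ξ h

theorem measurable_ptilde {δ : ℝ} (hδ : 0 < δ) : Measurable (ptilde δ) := by
  rw [show ptilde δ = fun ξ => 3 / δ ^ 3 * profile (δ * ξ) from funext (ptilde_eq hδ)]
  unfold profile
  have h1 : Measurable cosh := continuous_cosh.measurable
  have h2 : Measurable sinh := continuous_sinh.measurable
  fun_prop

/-! ### Convexity of the profile and transversality -/

/-- The derivative of `profile` on `(0, ∞)`. -/
noncomputable def profile' (x : ℝ) : ℝ :=
  2 * x * cosh x / sinh x - x ^ 2 / sinh x ^ 2 - 1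

theorem hasDerivAt_profile {x : ℝ} (hx : 0 < x) : HasDerivAt profile (profile' x) x := by
  have hs : sinh x ≠ 0 := (sinh_pos_iff.2 hx).ne'
  have h := ((((hasDerivAt_id x).pow 2).mul (hasDerivAt_cosh x)).div (hasDerivAt_sinh x) hs).sub
    (hasDerivAt_id x)
  refine HasDerivAt.congr_deriv h ?_
  have hc := cosh_sq x
  simp [profile']
  field_simp
  linear_combination (-x) * hc

theorem hasDerivAt_profile' {x : ℝ} (hx : 0 < x) : HasDerivAt profile'
    (2 * (cosh x * (sinh x ^ 2 + x ^ 2) - 2 * x * sinh x) / sinh x ^ 3) x := by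
  have hs : sinh x ≠ 0 := (sinh_pos_iff.2 hx).ne'
  have h := ((((((hasDerivAt_id x).const_mul 2).mul (hasDerivAt_cosh x)).div
    (hasDerivAt_sinh x) hs).sub
    (((hasDerivAt_id x).pow 2).div ((hasDerivAt_sinh x).pow 2) (pow_ne_zero 2 hs)))).sub_const 1
  refine HasDerivAt.congr_deriv h ?_
  have hc := cosh_sq x
  simp
  field_simp
  linear_combination (-x * sinh x) * hc

/-- The bound `g'' ≥ 1/2` on `[1, ∞)`, in integrated form. It rests on
`cosh x (sinh² x + x²) - 2 x sinh x ≥ (cosh x - 1) sinh² x + (sinh x - x)²`. -/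
theorem profile'_sub_le {x y : ℝ} (hx : 1 ≤ x) (hxy : x ≤ y) :
    (y - x) / 2 ≤ profile' y - profile' x := by
  have hder : ∀ z ∈ Set.Ici (1 : ℝ), HasDerivAt (fun z => profile' z)
      (2 * (cosh z * (sinh z ^ 2 + z ^ 2) - 2 * z * sinh z) / sinh z ^ 3) z :=
    fun z hz => hasDerivAt_profile' (lt_of_lt_of_le one_pos hz)
  have := (convex_Ici (1 : ℝ)).mul_sub_le_image_sub_of_le_deriv (f := profile') (C := 1 / 2)
    (fun z hz => (hder z hz).continuousAt.continuousWithinAt)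
    (fun z hz => (hder z (interior_subset hz)).differentiableAt.differentiableWithinAt)
    (fun z hz => by
      have hz1 : 1 ≤ z := interior_subset hz
      rw [(hder z hz1).deriv]
      have hs : 0 < sinh z := sinh_pos_iff.2 (by linarith)
      have he : 2 ≤ exp z := by linarith [add_one_le_exp z]
      -- `4 (cosh z - 1) ≥ sinh z` is `(e^z - 1) (3 e^z - 5) ≥ 0` after multiplication by `2 e^z`
      have hcs : sinh z ≤ 4 * (cosh z - 1) := by
        rw [sinh_eq, cosh_eq, exp_neg]
        have : (exp z)⁻¹ * exp z = 1 := inv_mul_cancel₀ (exp_pos z).ne'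
        have hi : 0 < (exp z)⁻¹ := by positivity
        nlinarith [mul_nonneg (mul_nonneg (sub_nonneg.2 he) (sub_nonneg.2 he)) hi.le,
          mul_nonneg (sub_nonneg.2 he) hi.le]
      rw [le_div_iff₀ (by positivity)]
      nlinarith [sq_nonneg (sinh z - z), sq_nonneg (sinh z),
        mul_nonneg (sub_nonneg.2 hcs) (sq_nonneg (sinh z)),
        mul_nonneg (sub_nonneg.2 (one_le_cosh z)) (sq_nonneg z)])
    x hx y (hx.trans hxy) hxy
  linarith

/-- Lower bound for the mixed second difference of `g`, obtained by integrating
`g'(z + s) - g'(z) ≥ s / 2`. -/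
theorem profile_second_diff {s x y : ℝ} (hs : 0 ≤ s) (hx : 1 ≤ x) (hxy : x ≤ y) :
    s / 2 * (y - x) ≤ (profile (y + s) - profile y) - (profile (x + s) - profile x) := by
  have hder : ∀ z ∈ Set.Ici (1 : ℝ), HasDerivAt (fun z => profile (z + s) - profile z)
      (profile' (z + s) - profile' z) z := fun z hz => by
    have hz1 : 1 ≤ z := hz
    exact ((hasDerivAt_profile (by linarith : 0 < z + s)).comp_add_const z s).sub
      (hasDerivAt_profile (by linarith))
  have := (convex_Ici (1 : ℝ)).mul_sub_le_image_sub_of_le_deriv (C := s / 2)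
    (fun z hz => (hder z hz).continuousAt.continuousWithinAt)
    (fun z hz => (hder z (interior_subset hz)).differentiableAt.differentiableWithinAt)
    (fun z hz => by
      rw [(hder z (interior_subset hz)).deriv]
      have := profile'_sub_le (x := z) (y := z + s) (interior_subset hz) (by linarith)
      linarith)
    x hx y (hx.trans hxy) hxy
  exact this

/-- Transversality: for high frequencies of the same sign, `x ↦ p̃(x) - p̃(x - ξ)` expands
distances by at least `(3/2) |ξ| / δ`. -/
theorem ptilde_transversal {δ ξ x y : ℝ} (hδ : 0 < δ) (hx : δ⁻¹ < x) (hxξ : δ⁻¹ < x - ξ)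
    (hy : δ⁻¹ < y) (hyξ : δ⁻¹ < y - ξ) :
    3 / 2 * |ξ| / δ * |x - y| ≤
      |(ptilde δ x - ptilde δ (x - ξ)) - (ptilde δ y - ptilde δ (y - ξ))| := by
  have h1 : ∀ z, δ⁻¹ < z → 1 ≤ δ * z := fun z hz => by
    have := mul_lt_mul_of_pos_left hz hδ
    rw [mul_inv_cancel₀ hδ.ne'] at this
    exact this.le
  -- the case `s ≥ 0`, `u ≤ v`, to which the others reduce by symmetry
  have base : ∀ s u v : ℝ, 0 ≤ s → δ⁻¹ < u → u ≤ v → 3 / 2 * s / δ * (v - u) ≤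
      (ptilde δ (v + s) - ptilde δ v) - (ptilde δ (u + s) - ptilde δ u) := by
    intro s u v hs hu huv
    have h := profile_second_diff (mul_nonneg hδ.le hs) (h1 u hu)
      (mul_le_mul_of_nonneg_left huv hδ.le)
    simp only [ptilde_eq hδ]
    have hc : (0 : ℝ) ≤ 3 / δ ^ 3 := by positivity
    have h2 := mul_le_mul_of_nonneg_left h hc
    calc 3 / 2 * s / δ * (v - u) = 3 / δ ^ 3 * (δ * s / 2 * (δ * v - δ * u)) := by field_simp
      _ ≤ _ := h2
      _ = _ := by rw [mul_add, mul_add]; ring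
  have base' : ∀ s u v : ℝ, 0 ≤ s → δ⁻¹ < u → δ⁻¹ < v → 3 / 2 * s / δ * |v - u| ≤
      |(ptilde δ (v + s) - ptilde δ v) - (ptilde δ (u + s) - ptilde δ u)| := by
    intro s u v hs hu hv
    rcases le_total u v with h | h
    · rw [abs_of_nonneg (sub_nonneg.2 h)]
      exact (base s u v hs hu h).trans (le_abs_self _)
    · rw [abs_sub_comm v u, abs_sub_comm (_ - _), abs_of_nonneg (sub_nonneg.2 h)]
      exact (base s v u hs hv h).trans (le_abs_self _)
  rcases le_total 0 ξ with h | h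
  · have := base' ξ (y - ξ) (x - ξ) h hyξ hxξ
    simpa [abs_of_nonneg h] using this
  · have := base' (-ξ) x y (by linarith) hx hy
    rw [abs_of_nonpos h]
    rw [abs_sub_comm x y]
    refine this.trans (le_of_eq ?_)
    rw [← sub_eq_add_neg, ← sub_eq_add_neg]
    congr 1
    ring

/-! ### Integrals of the weight `⟨x⟩^{-2b}` -/

/-- The weight `⟨x⟩^{-2b} = (1 + x²)^{-b}`, with values in `[0, ∞]`. -/
noncomputable def wt (b x : ℝ) : ENNReal := ENNReal.ofReal ((1 + x ^ 2) ^ (-b))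

theorem measurable_wt (b : ℝ) : Measurable (wt b) := by
  unfold wt; fun_prop

theorem lintegral_wt_ne_top {b : ℝ} (hb : 1 / 2 < b) : ∫⁻ x, wt b x ≠ ⊤ := by
  have h := integrable_rpow_neg_one_add_norm_sq (E := ℝ) (μ := volume) (r := 2 * b)
    (by simp; linarith)
  have := h.lintegral_lt_top
  simp only [Real.norm_eq_abs, sq_abs, show -(2 * b) / 2 = -b by ring] at this
  exact this.ne

theorem jap_rpow_nonneg (x c : ℝ) : 0 ≤ jap x ^ c := rpow_nonneg (sqrt_nonneg _) _

theorem jap_rpow_sq (b x : ℝ) : ENNReal.ofReal (jap x ^ (-b)) ^ 2 = wt b x := by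
  have h : 0 ≤ 1 + x ^ 2 := by positivity
  have h0 : 0 ≤ √(1 + x ^ 2) := sqrt_nonneg _
  rw [← ENNReal.ofReal_pow (jap_rpow_nonneg _ _), wt, jap]
  congr 1
  rw [← rpow_natCast, ← rpow_mul h0, mul_comm, rpow_mul h0]
  norm_num [sq_sqrt h]

theorem wt_le {b c x y : ℝ} (hb : 0 ≤ b) (hc : 0 < c) (h : 1 + y ^ 2 ≤ c * (1 + x ^ 2)) :
    wt b x ≤ ENNReal.ofReal (c ^ b) * wt b y := by
  rw [wt, wt, ← ENNReal.ofReal_mul (by positivity)]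
  apply ENNReal.ofReal_le_ofReal
  have h1 : (c * (1 + x ^ 2)) ^ (-b) ≤ (1 + y ^ 2) ^ (-b) :=
    rpow_le_rpow_of_nonpos (by positivity) h (by linarith)
  rw [mul_rpow hc.le (by positivity), rpow_neg hc.le] at h1
  have hcb : 0 < c ^ b := rpow_pos_of_pos hc b
  calc (1 + x ^ 2) ^ (-b) = c ^ b * ((c ^ b)⁻¹ * (1 + x ^ 2) ^ (-b)) := by
        rw [mul_inv_cancel_left₀ hcb.ne']
    _ ≤ _ := mul_le_mul_of_nonneg_left h1 hcb.le

/-- One of `|x|`, `|y|` is at least `|x + y| / 2`, so one of the two factors is controlled by the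
weight at `x + y`. -/
theorem wt_mul_wt_le {b : ℝ} (hb : 0 ≤ b) (x y : ℝ) :
    wt b x * wt b y ≤ ENNReal.ofReal (4 ^ b) * wt b (x + y) * (wt b x + wt b y) := by
  rcases le_total (|x|) (|y|) with h | h
  · have h2 : x ^ 2 ≤ y ^ 2 := sq_le_sq.2 h
    have := wt_le (x := y) (y := x + y) hb (by norm_num : (0 : ℝ) < 4)
      (by nlinarith [sq_nonneg (x - y)])
    calc wt b x * wt b y ≤ wt b x * (ENNReal.ofReal (4 ^ b) * wt b (x + y)) := by gcongr
      _ = ENNReal.ofReal (4 ^ b) * wt b (x + y) * wt b x := mul_comm _ _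
      _ ≤ _ := by gcongr; exact le_self_add
  · have h2 : y ^ 2 ≤ x ^ 2 := sq_le_sq.2 h
    have := wt_le (x := x) (y := x + y) hb (by norm_num : (0 : ℝ) < 4)
      (by nlinarith [sq_nonneg (x - y)])
    calc wt b x * wt b y ≤ (ENNReal.ofReal (4 ^ b) * wt b (x + y)) * wt b y := by gcongr
      _ ≤ _ := by gcongr; exact le_add_self

theorem lintegral_wt_conv_le {b : ℝ} (hb : 0 ≤ b) (τ α β : ℝ) :
    ∫⁻ t, wt b (t - α) * wt b (τ - t - β) ≤
      2 * ENNReal.ofReal (4 ^ b) * (∫⁻ x, wt b x) * wt b (τ - (α + β)) := by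
  have hm := measurable_wt b
  calc ∫⁻ t, wt b (t - α) * wt b (τ - t - β)
      ≤ ∫⁻ t, ENNReal.ofReal (4 ^ b) * wt b (τ - (α + β)) *
          (wt b (t - α) + wt b (τ - t - β)) := by
        refine lintegral_mono fun t => ?_
        have := wt_mul_wt_le hb (t - α) (τ - t - β)
        rwa [show t - α + (τ - t - β) = τ - (α + β) by ring] at this
    _ = ENNReal.ofReal (4 ^ b) * wt b (τ - (α + β)) *
          ((∫⁻ t, wt b (t - α)) + ∫⁻ t, wt b (τ - t - β)) := by
        rw [lintegral_const_mul _ (by fun_prop), lintegral_add_left (by fun_prop)]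
    _ = _ := by
        rw [lintegral_sub_right_eq_self (wt b) α]
        simp_rw [show ∀ t, τ - t - β = τ - β - t by intro t; ring]
        rw [lintegral_sub_left_eq_self (wt b) (τ - β)]
        ring

theorem lintegral_wt_scale {b K : ℝ} (hK : 0 < K) (x₀ : ℝ) :
    ∫⁻ x, wt b (K * (x - x₀)) = ENNReal.ofReal K⁻¹ * ∫⁻ x, wt b x := by
  rw [lintegral_sub_right_eq_self (fun x => wt b (K * x)) x₀,
    ← lintegral_map (f := wt b) (g := fun x => K * x) (measurable_wt b) (by fun_prop),
    Real.map_volume_mul_left hK.ne', lintegral_smul_measure, abs_of_pos (inv_pos.2 hK)]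
  rfl

/-- If `h` expands distances on `S` by a factor `K`, then `⟨a - h⟩^{-2b}` has integral `O(1 / K)` over
`S`: it is dominated by a multiple of `⟨K (x - x₀)⟩^{-2b}` for `x₀` an almost minimiser of `|a - h|`.
No regularity of `h` or `S` is needed. -/
theorem lintegral_wt_expanding_le {b K : ℝ} (hb : 0 ≤ b) (hK : 0 < K) (S : Set ℝ) (h : ℝ → ℝ)
    (hh : ∀ x ∈ S, ∀ y ∈ S, K * |x - y| ≤ |h x - h y|) (a : ℝ) :
    ∫⁻ x, S.indicator (fun x => wt b (a - h x)) x ≤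
      ENNReal.ofReal (8 ^ b) * (ENNReal.ofReal K⁻¹ * ∫⁻ x, wt b x) := by
  rcases S.eq_empty_or_nonempty with rfl | hS
  · simp
  -- `x₀` minimises `|a - h x|` over `S` up to an error `1`
  obtain ⟨x₀, hx₀, hmin⟩ : ∃ x₀ ∈ S, ∀ x ∈ S, |a - h x₀| ≤ |a - h x| + 1 := by
    have hne : ((fun x => |a - h x|) '' S).Nonempty := hS.image _
    have hbd : BddBelow ((fun x => |a - h x|) '' S) :=
      ⟨0, by rintro _ ⟨x, -, rfl⟩; exact abs_nonneg _⟩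
    obtain ⟨_, ⟨x₀, hx₀, rfl⟩, hlt⟩ := exists_lt_of_csInf_lt hne (lt_add_one _)
    exact ⟨x₀, hx₀, fun x hx => hlt.le.trans
      (by linarith [csInf_le hbd (Set.mem_image_of_mem (fun x => |a - h x|) hx)])⟩
  rw [← lintegral_wt_scale hK x₀, ← lintegral_const_mul _ (by
    have := measurable_wt b
    fun_prop)]
  refine lintegral_mono fun x => ?_
  by_cases hx : x ∈ S
  swap
  · simp [Set.indicator_of_notMem hx]
  rw [Set.indicator_of_mem hx]
  refine wt_le hb (by norm_num) ?_
  have h1 := hh x hx x₀ hx₀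
  have h2 := hmin x hx
  have h3 : |h x - h x₀| ≤ |a - h x| + |a - h x₀| := by
    calc |h x - h x₀| = |(a - h x₀) - (a - h x)| := by ring_nf
      _ ≤ _ := by rw [add_comm]; exact abs_sub _ _
  have h4 : |K * (x - x₀)| ≤ 2 * |a - h x| + 1 := by
    rw [abs_mul, abs_of_pos hK]; linarith
  have h5 : (K * (x - x₀)) ^ 2 ≤ (2 * |a - h x| + 1) ^ 2 := by
    rw [← sq_abs]; gcongr
  nlinarith [sq_abs (a - h x), sq_nonneg (2 * |a - h x| - 1)]

/-- The Cauchy-Schwarz inequality in `L²(ℝ²)`, with values in `[0, ∞]`. -/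
theorem sq_lintegral_mul_le {f g : ℝ × ℝ → ENNReal} (hf : Measurable f) (hg : Measurable g) :
    (∫⁻ x, f x * g x) ^ 2 ≤ (∫⁻ x, f x ^ 2) * ∫⁻ x, g x ^ 2 := by
  have h := ENNReal.lintegral_mul_le_Lp_mul_Lq volume Real.HolderConjugate.two_two
    hf.aemeasurable hg.aemeasurable
  simp only [Pi.mul_apply, ENNReal.rpow_two] at h
  calc (∫⁻ x, f x * g x) ^ 2
      ≤ ((∫⁻ x, f x ^ 2) ^ (1 / 2 : ℝ) * (∫⁻ x, g x ^ 2) ^ (1 / 2 : ℝ)) ^ 2 := by gcongr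
    _ = _ := by
      rw [mul_pow, ← ENNReal.rpow_two, ← ENNReal.rpow_two, ← ENNReal.rpow_mul,
        ← ENNReal.rpow_mul]
      norm_num

/-! ### The kernel bound -/

/-- The set of `x` such that the input frequencies `x` and `ξ - x` are both high. -/
def highSet (δ ξ : ℝ) : Set ℝ := {x | δ⁻¹ < |x| ∧ δ⁻¹ < |ξ - x|}

theorem measurableSet_highSet (δ ξ : ℝ) : MeasurableSet (highSet δ ξ) :=
  have h1 : MeasurableSet {x : ℝ | δ⁻¹ < |x|} :=
    (isOpen_lt (by fun_prop) (by fun_prop)).measurableSet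
  have h2 : MeasurableSet {x : ℝ | δ⁻¹ < |ξ - x|} :=
    (isOpen_lt (by fun_prop) (by fun_prop)).measurableSet
  h1.inter h2

/-- For a low output frequency `ξ`, the frequencies `x` and `ξ - x` have opposite signs on `highSet`;
on each of the two resulting pieces the phase `p̃(x) + p̃(ξ - x)` is expanding. -/
theorem lintegral_highSet_le {b δ ξ : ℝ} (hb : 0 ≤ b) (hδ : 0 < δ) (hξ : |ξ| ≤ δ⁻¹)
    (hξ0 : ξ ≠ 0) (τ : ℝ) :
    ∫⁻ x, (highSet δ ξ).indicator
        (fun x => wt b (τ - (ptilde δ x + ptilde δ (ξ - x)))) x ≤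
      2 * (ENNReal.ofReal (8 ^ b) *
        (ENNReal.ofReal (3 / 2 * |ξ| / δ)⁻¹ * ∫⁻ x, wt b x)) := by
  have hK : 0 < 3 / 2 * |ξ| / δ := by have := abs_pos.2 hξ0; positivity
  have hδi : 0 < δ⁻¹ := inv_pos.2 hδ
  set A : Set ℝ := {x | δ⁻¹ < x ∧ δ⁻¹ < x - ξ} with hA
  set B : Set ℝ := {x | δ⁻¹ < -x ∧ δ⁻¹ < ξ - x} with hB
  set φ : ℝ → ℝ := fun x => ptilde δ x + ptilde δ (ξ - x) with hφ
  have hm : Measurable φ := by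
    have := measurable_ptilde hδ
    fun_prop
  have hAexp : ∀ x ∈ A, ∀ y ∈ A, 3 / 2 * |ξ| / δ * |x - y| ≤ |φ x - φ y| := by
    intro x hx y hy
    have h := ptilde_transversal hδ hx.1 hx.2 hy.1 hy.2
    have e : ∀ z, φ z = ptilde δ z - ptilde δ (z - ξ) := fun z => by
      simp only [hφ]
      rw [show ξ - z = -(z - ξ) by ring, ptilde_neg]; ring
    rwa [e, e]
  have hBexp : ∀ x ∈ B, ∀ y ∈ B, 3 / 2 * |ξ| / δ * |x - y| ≤ |φ x - φ y| := by
    intro x hx y hy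
    have e' : ∀ z : ℝ, ξ - z - ξ = -z := fun z => by ring
    have h := ptilde_transversal (ξ := ξ) hδ hx.2 (by rw [e']; exact hx.1) hy.2
      (by rw [e']; exact hy.1)
    have e : ∀ z, φ z = ptilde δ (ξ - z) - ptilde δ (ξ - z - ξ) := fun z => by
      rw [e', ptilde_neg]; simp only [hφ]; ring
    rw [e, e, abs_sub_comm x y]
    rwa [show ξ - x - (ξ - y) = y - x by ring] at h
  have hsub : highSet δ ξ ⊆ A ∪ B := by
    rintro x ⟨h1, h2⟩
    have h3 := abs_le.1 hξ
    rcases lt_abs.1 h1 with h | h <;> rcases lt_abs.1 h2 with h' | h'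
    · linarith
    · exact Or.inl ⟨h, by linarith⟩
    · exact Or.inr ⟨h, h'⟩
    · linarith
  have hAm : MeasurableSet A := by
    have h1 : MeasurableSet {x : ℝ | δ⁻¹ < x} :=
      (isOpen_lt (by fun_prop) (by fun_prop)).measurableSet
    have h2 : MeasurableSet {x : ℝ | δ⁻¹ < x - ξ} :=
      (isOpen_lt (by fun_prop) (by fun_prop)).measurableSet
    exact h1.inter h2
  calc ∫⁻ x, (highSet δ ξ).indicator (fun x => wt b (τ - φ x)) x
      ≤ ∫⁻ x, (A.indicator (fun x => wt b (τ - φ x)) x +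
          B.indicator (fun x => wt b (τ - φ x)) x) := by
        refine lintegral_mono fun x => ?_
        by_cases hx : x ∈ highSet δ ξ
        swap
        · simp [Set.indicator_of_notMem hx]
        rw [Set.indicator_of_mem hx]
        rcases hsub hx with h | h
        · simp only [Set.indicator_of_mem h]; exact le_self_add
        · simp only [Set.indicator_of_mem h]; exact le_add_self
    _ = (∫⁻ x, A.indicator (fun x => wt b (τ - φ x)) x) +
          ∫⁻ x, B.indicator (fun x => wt b (τ - φ x)) x :=
        lintegral_add_left (((measurable_wt b).comp (by fun_prop)).indicator hAm) _
    _ ≤ _ := by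
        rw [two_mul]
        exact add_le_add (lintegral_wt_expanding_le hb hK A φ hAexp τ)
          (lintegral_wt_expanding_le hb hK B φ hBexp τ)

/-- The uniform bound for the kernel integrals. -/
noncomputable def kernelConst (b : ℝ) : ENNReal :=
  (2 * ENNReal.ofReal (4 ^ b) * ∫⁻ x, wt b x) * (2 * (ENNReal.ofReal (8 ^ b) * ∫⁻ x, wt b x))

theorem kernelConst_ne_top {b : ℝ} (hb : 1 / 2 < b) : kernelConst b ≠ ⊤ := by
  have := lintegral_wt_ne_top hb
  unfold kernelConst
  finiteness

/-- The kernel `⟨τ₁ - p̃(ξ₁)⟩^{-b} ⟨τ - τ₁ - p̃(ξ - ξ₁)⟩^{-b}`, restricted to high input frequencies,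
with `p = (τ, ξ)` and `q = (τ₁, ξ₁)`. -/
noncomputable def ker (b δ : ℝ) (p q : ℝ × ℝ) : ENNReal :=
  (highSet δ p.2).indicator (fun _ => ENNReal.ofReal (jap (q.1 - ptilde δ q.2) ^ (-b)) *
    ENNReal.ofReal (jap ((p.1 - q.1) - ptilde δ (p.2 - q.2)) ^ (-b))) q.2

theorem measurable_ker (b : ℝ) {δ : ℝ} (hδ : 0 < δ) (p : ℝ × ℝ) : Measurable (ker b δ p) := by
  have hp := measurable_ptilde hδ
  have hj : Measurable jap := by unfold jap; fun_prop
  have : ker b δ p = (Prod.snd ⁻¹' highSet δ p.2).indicator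
      (fun q => ENNReal.ofReal (jap (q.1 - ptilde δ q.2) ^ (-b)) *
        ENNReal.ofReal (jap ((p.1 - q.1) - ptilde δ (p.2 - q.2)) ^ (-b))) := by
    ext q
    simp only [ker, Set.indicator]
    rfl
  rw [this]
  exact Measurable.indicator (by fun_prop) (measurable_snd (measurableSet_highSet δ p.2))

theorem ker_sq (b δ : ℝ) (p q : ℝ × ℝ) : ker b δ p q ^ 2 =
    (highSet δ p.2).indicator (fun x => wt b (q.1 - ptilde δ x) *
      wt b (p.1 - q.1 - ptilde δ (p.2 - x))) q.2 := by
  unfold ker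
  by_cases h : q.2 ∈ highSet δ p.2
  · simp only [Set.indicator_of_mem h]
    rw [mul_pow, jap_rpow_sq, jap_rpow_sq]
  · simp [Set.indicator_of_notMem h]

/-- The uniform bound on the kernel to which Cauchy-Schwarz reduces the theorem. -/
theorem sq_mul_lintegral_ker_sq_le {b δ : ℝ} (hb : 0 ≤ b) (hδ : 0 < δ) (p : ℝ × ℝ)
    (hp : |p.2| ≤ δ⁻¹) :
    ENNReal.ofReal (|p.2| ^ 2) * ∫⁻ q, ker b δ p q ^ 2 ≤ kernelConst b := by
  obtain ⟨τ, ξ⟩ := p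
  dsimp only at hp ⊢
  rcases eq_or_ne ξ 0 with rfl | hξ0
  · simp
  have hξ : 0 < |ξ| := abs_pos.2 hξ0
  set I := ∫⁻ x, wt b x
  have h1 : ∫⁻ q, ker b δ (τ, ξ) q ^ 2 ≤ (2 * ENNReal.ofReal (4 ^ b) * I) *
      (2 * (ENNReal.ofReal (8 ^ b) * (ENNReal.ofReal (3 / 2 * |ξ| / δ)⁻¹ * I))) := by
    calc ∫⁻ q, ker b δ (τ, ξ) q ^ 2
        = ∫⁻ x, ∫⁻ t, ker b δ (τ, ξ) (t, x) ^ 2 :=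
          lintegral_prod_symm' _ ((measurable_ker b hδ _).pow_const 2)
      _ ≤ ∫⁻ x, (2 * ENNReal.ofReal (4 ^ b) * I) * (highSet δ ξ).indicator
            (fun x => wt b (τ - (ptilde δ x + ptilde δ (ξ - x)))) x := by
          refine lintegral_mono fun x => ?_
          simp only [ker_sq]
          by_cases h : x ∈ highSet δ ξ
          · simp only [Set.indicator_of_mem h]
            exact lintegral_wt_conv_le hb τ _ _
          · simp [Set.indicator_of_notMem h]
      _ = (2 * ENNReal.ofReal (4 ^ b) * I) * ∫⁻ x, (highSet δ ξ).indicator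
            (fun x => wt b (τ - (ptilde δ x + ptilde δ (ξ - x)))) x := by
          refine lintegral_const_mul _ (Measurable.indicator ?_ (measurableSet_highSet δ ξ))
          have := measurable_ptilde hδ
          exact (measurable_wt b).comp (by fun_prop)
      _ ≤ _ := by gcongr; exact lintegral_highSet_le hb hδ hp hξ0 τ
  -- the loss `(|ξ| / δ)⁻¹` is beaten by `|ξ| ^ 2` because `δ |ξ| ≤ 1`
  have h2 : ENNReal.ofReal (|ξ| ^ 2) * ENNReal.ofReal (3 / 2 * |ξ| / δ)⁻¹ ≤ 1 := by
    rw [← ENNReal.ofReal_mul (by positivity), ENNReal.ofReal_le_one]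
    have h3 : |ξ| * δ ≤ 1 := by
      calc |ξ| * δ ≤ δ⁻¹ * δ := by gcongr
        _ = 1 := inv_mul_cancel₀ hδ.ne'
    calc |ξ| ^ 2 * (3 / 2 * |ξ| / δ)⁻¹ = 2 / 3 * (|ξ| * δ) := by field_simp
      _ ≤ 1 := by linarith
  calc ENNReal.ofReal (|ξ| ^ 2) * ∫⁻ q, ker b δ (τ, ξ) q ^ 2
      ≤ ENNReal.ofReal (|ξ| ^ 2) * ((2 * ENNReal.ofReal (4 ^ b) * I) *
      (2 * (ENNReal.ofReal (8 ^ b) * (ENNReal.ofReal (3 / 2 * |ξ| / δ)⁻¹ * I)))) := by gcongr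
    _ = (ENNReal.ofReal (|ξ| ^ 2) * ENNReal.ofReal (3 / 2 * |ξ| / δ)⁻¹) * kernelConst b := by
      unfold kernelConst; ring
    _ ≤ 1 * kernelConst b := by gcongr
    _ = kernelConst b := one_mul _

theorem lintegral_lintegral_mul_sub {u v : ℝ × ℝ → ENNReal} (hu : Measurable u)
    (hv : Measurable v) :
    ∫⁻ p, ∫⁻ q, u q * v (p - q) = (∫⁻ q, u q) * ∫⁻ p, v p := by
  rw [lintegral_lintegral_swap (by
    refine Measurable.aemeasurable ?_
    unfold Function.uncurry
    fun_prop)]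
  calc ∫⁻ q, ∫⁻ p, u q * v (p - q) = ∫⁻ q, u q * ∫⁻ p, v p := by
        refine lintegral_congr fun q => ?_
        rw [lintegral_const_mul _ (by fun_prop), lintegral_sub_right_eq_self v q]
    _ = _ := lintegral_mul_const _ hu

/-! ### The bilinear estimate -/

/-- Fourier-side reduced form of the uniform-in-δ bilinear `X^{s,b}` estimate
(high × high → low) for the scaled ILW: input frequencies `|ξ_j| > δ⁻¹`,
output frequency `|ξ| ≤ δ⁻¹`. A point `p : ℝ × ℝ` denotes `(τ, ξ)`. -/
theorem bilinear_high_high_low (b b' : ℝ) (hb : 1 / 2 < b) (hb' : b' ≤ 5 / 8) :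
    ∃ C > 0, ∀ δ ∈ Set.Ioc (0 : ℝ) 1, ∀ f₁ f₂ : ℝ × ℝ → ℝ,
      Measurable f₁ → Measurable f₂ →
      (∀ p, 0 ≤ f₁ p) → (∀ p, 0 ≤ f₂ p) →
      (∀ τ ξ : ℝ, |ξ| ≤ δ⁻¹ → f₁ (τ, ξ) = 0) →
      (∀ τ ξ : ℝ, |ξ| ≤ δ⁻¹ → f₂ (τ, ξ) = 0) →
      (∫⁻ p : ℝ × ℝ,
          Set.indicator {q : ℝ × ℝ | |q.2| ≤ δ⁻¹}
            (fun q => ENNReal.ofReal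
              (|q.2| ^ 2 * jap (q.1 - ptilde δ q.2) ^ (2 * (b' - 1)))) p *
          (∫⁻ q : ℝ × ℝ, ENNReal.ofReal
              (f₁ q * f₂ (p - q) *
                jap (q.1 - ptilde δ q.2) ^ (-b) *
                jap ((p.1 - q.1) - ptilde δ (p.2 - q.2)) ^ (-b))) ^ 2) ^ ((1 : ℝ) / 2)
        ≤ ENNReal.ofReal C *
          (∫⁻ p : ℝ × ℝ, ENNReal.ofReal (f₁ p ^ 2)) ^ ((1 : ℝ) / 2) *
          (∫⁻ p : ℝ × ℝ, ENNReal.ofReal (f₂ p ^ 2)) ^ ((1 : ℝ) / 2) := by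
  have hb0 : 0 ≤ b := by linarith
  -- the summand `1` only serves to make the constant positive
  refine ⟨(kernelConst b ^ (1 / 2 : ℝ)).toReal + 1, by positivity, ?_⟩
  rintro δ ⟨hδ, -⟩ f₁ f₂ hf₁ hf₂ hf₁0 hf₂0 hs₁ hs₂
  set A := ∫⁻ p : ℝ × ℝ, ENNReal.ofReal (f₁ p ^ 2)
  set B := ∫⁻ p : ℝ × ℝ, ENNReal.ofReal (f₂ p ^ 2)
  have hpt : ∀ p : ℝ × ℝ, Set.indicator {q : ℝ × ℝ | |q.2| ≤ δ⁻¹}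
            (fun q => ENNReal.ofReal
              (|q.2| ^ 2 * jap (q.1 - ptilde δ q.2) ^ (2 * (b' - 1)))) p *
          (∫⁻ q : ℝ × ℝ, ENNReal.ofReal
              (f₁ q * f₂ (p - q) *
                jap (q.1 - ptilde δ q.2) ^ (-b) *
                jap ((p.1 - q.1) - ptilde δ (p.2 - q.2)) ^ (-b))) ^ 2 ≤
      kernelConst b * ∫⁻ q, ENNReal.ofReal (f₁ q ^ 2) * ENNReal.ofReal (f₂ (p - q) ^ 2) := by
    intro p
    by_cases hp : |p.2| ≤ δ⁻¹
    swap
    · simp [Set.indicator, hp]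
    rw [Set.indicator_of_mem (by exact hp)]
    have hjap : ∀ x, 1 ≤ jap x := fun x => by
      rw [jap, one_le_sqrt]; nlinarith [sq_nonneg x]
    have hw : ENNReal.ofReal (|p.2| ^ 2 * jap (p.1 - ptilde δ p.2) ^ (2 * (b' - 1))) ≤
        ENNReal.ofReal (|p.2| ^ 2) := by
      apply ENNReal.ofReal_le_ofReal
      exact mul_le_of_le_one_right (by positivity)
        (rpow_le_one_of_one_le_of_nonpos (hjap _) (by linarith))
    -- off `highSet` one of `f₁ q`, `f₂ (p - q)` vanishes
    have hin : ∀ q : ℝ × ℝ, ENNReal.ofReal (f₁ q * f₂ (p - q) *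
                jap (q.1 - ptilde δ q.2) ^ (-b) *
                jap ((p.1 - q.1) - ptilde δ (p.2 - q.2)) ^ (-b)) =
        ENNReal.ofReal (f₁ q * f₂ (p - q)) * ker b δ p q := by
      intro q
      by_cases hq : q.2 ∈ highSet δ p.2
      · rw [ker, Set.indicator_of_mem hq, mul_assoc,
          ENNReal.ofReal_mul (mul_nonneg (hf₁0 _) (hf₂0 _)),
          ENNReal.ofReal_mul (jap_rpow_nonneg _ _)]
      · have : f₁ q * f₂ (p - q) = 0 := by
          by_cases h1 : δ⁻¹ < |q.2|
          · have h2 : ¬ δ⁻¹ < |p.2 - q.2| := fun h2 => hq ⟨h1, h2⟩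
            exact mul_eq_zero_of_right _ (hs₂ (p - q).1 (p - q).2 (not_lt.1 h2))
          · exact mul_eq_zero_of_left (hs₁ q.1 q.2 (not_lt.1 h1)) _
        simp [this]
    simp_rw [hin]
    calc _ ≤ ENNReal.ofReal (|p.2| ^ 2) * ((∫⁻ q, ENNReal.ofReal (f₁ q * f₂ (p - q)) ^ 2) *
            ∫⁻ q, ker b δ p q ^ 2) := by
          gcongr
          exact sq_lintegral_mul_le (by fun_prop) (measurable_ker b hδ p)
      _ = (ENNReal.ofReal (|p.2| ^ 2) * ∫⁻ q, ker b δ p q ^ 2) *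
            ∫⁻ q, ENNReal.ofReal (f₁ q * f₂ (p - q)) ^ 2 := by ring
      _ ≤ kernelConst b * ∫⁻ q, ENNReal.ofReal (f₁ q * f₂ (p - q)) ^ 2 := by
          gcongr
          exact sq_mul_lintegral_ker_sq_le hb0 hδ p hp
      _ = _ := by
          congr 1
          refine lintegral_congr fun q => ?_
          rw [ENNReal.ofReal_mul (hf₁0 _), mul_pow, ENNReal.ofReal_pow (hf₁0 _),
            ENNReal.ofReal_pow (hf₂0 _)]
  have hmain := calc _ ≤ ∫⁻ p, kernelConst b *
        ∫⁻ q, ENNReal.ofReal (f₁ q ^ 2) * ENNReal.ofReal (f₂ (p - q) ^ 2) := lintegral_mono hpt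
    _ = kernelConst b *
        ∫⁻ p, ∫⁻ q, ENNReal.ofReal (f₁ q ^ 2) * ENNReal.ofReal (f₂ (p - q) ^ 2) :=
      lintegral_const_mul' _ _ (kernelConst_ne_top hb)
    _ = kernelConst b * (A * B) := by
      rw [lintegral_lintegral_mul_sub (u := fun q => ENNReal.ofReal (f₁ q ^ 2))
        (v := fun q => ENNReal.ofReal (f₂ q ^ 2)) (by fun_prop) (by fun_prop)]
  refine (ENNReal.rpow_le_rpow hmain (by norm_num : (0 : ℝ) ≤ 1 / 2)).trans ?_
  rw [ENNReal.mul_rpow_of_nonneg _ _ (by norm_num), ENNReal.mul_rpow_of_nonneg _ _ (by norm_num),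
    ← mul_assoc]
  gcongr
  have hfin : kernelConst b ^ (1 / 2 : ℝ) ≠ ⊤ :=
    ENNReal.rpow_ne_top_of_nonneg (by norm_num) (kernelConst_ne_top hb)
  calc kernelConst b ^ (1 / 2 : ℝ) = ENNReal.ofReal (kernelConst b ^ (1 / 2 : ℝ)).toReal :=
        (ENNReal.ofReal_toReal hfin).symm
    _ ≤ _ := ENNReal.ofReal_le_ofReal (by linarith)
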